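/- Let β and γ be real numbers with (β, γ) ∈ Γ. Then some real number in the open interval (−1, 0) is realizable for the parameters β and γ. -/

import Mathlib

/-!
Work with the pair `(Z₀, Z₁)` of a rooted graph instead of its ratio, so that `Z₀ = 0` is allowed
in intermediate steps. A loop at the root acts on pairs by `(a, b) ↦ (β a, γ b)`, and moving the
root along a new edge acts by `(a, b) ↦ (β a + b, a + γ b)`, starting from `(1, 1)`.

If `γ < -1` a single edge suffices, and if `-γ < β` a single loop does. Otherwise `-1 ≤ γ` and
`|β| ≤ -γ`. When `|β| < -γ < 1`, an even number of loops makes `Z₁ / Z₀` large, and a new edge sends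
a large ratio close to `γ ∈ (-1, 0)`. On the boundary `β = -γ` an edge followed by a loop works, and
on the boundary `γ = -1` a double edge followed by an edge does; these two boundaries meet in the
excluded point `(1, -1)`.
-/

open scoped BigOperators

/-- A finite undirected multigraph (self-loops and parallel edges permitted),
with vertices `Fin n` and edges given as a multiset of (ordered representatives of)
unordered pairs of vertices.  Since the edge weight below is symmetric, the
orientation of each pair is immaterial. -/
structure MultiGraph where
  n : ℕ
  edges : Multiset (Fin n × Fin n)

/-- The edge interaction: `A₀₀ = β`, `A₀₁ = A₁₀ = 1`, `A₁₁ = γ`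
(spin `false` = 0, spin `true` = 1). -/
def edgeW (β γ : ℝ) (i j : Bool) : ℝ :=
  if i = j then (if i then γ else β) else 1

/-- `[Z_{G,v}]_i` : the partition function (no external fields) restricted to
spin configurations with `σ v = i`. -/
def Zvert (β γ : ℝ) (G : MultiGraph) (v : Fin G.n) (i : Bool) : ℝ :=
  ∑ σ : Fin G.n → Bool,
    if σ v = i then (G.edges.map fun e => edgeW β γ (σ e.1) (σ e.2)).prod else 0

/-- A real number `r` is realizable for the parameters `β, γ` if some graph `G`
and vertex `v` satisfy `[Z_{G,v}]₀ ≠ 0` and `[Z_{G,v}]₁ / [Z_{G,v}]₀ = r`. -/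
def Realizable (β γ r : ℝ) : Prop :=
  ∃ (G : MultiGraph) (v : Fin G.n),
    Zvert β γ G v false ≠ 0 ∧ Zvert β γ G v true / Zvert β γ G v false = r

namespace MultiGraph

/-- The graph with a single vertex and no edges. -/
def singleVertex : MultiGraph := ⟨1, 0⟩

/-- The graph obtained from `G` by adding `k` self-loops at `v`. -/
def addLoops (G : MultiGraph) (v : Fin G.n) (k : ℕ) : MultiGraph :=
  ⟨G.n, Multiset.replicate k (v, v) + G.edges⟩

/-- The graph obtained from `G` by joining a new vertex to `v` with `m` parallel edges. The new
vertex is `0`, and a vertex `u` of `G` becomes `u.succ`. -/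
def addPendant (G : MultiGraph) (v : Fin G.n) (m : ℕ) : MultiGraph :=
  ⟨G.n + 1, Multiset.replicate m (0, v.succ) + G.edges.map (Prod.map Fin.succ Fin.succ)⟩

end MultiGraph

section Zvert

variable (β γ : ℝ) (G : MultiGraph) (v : Fin G.n) (i : Bool)

lemma Zvert_singleVertex : Zvert β γ .singleVertex (0 : Fin 1) i = 1 := by
  unfold Zvert MultiGraph.singleVertex
  rw [← (Equiv.funUnique (Fin 1) Bool).symm.sum_comp]
  simp

lemma Zvert_addLoops (k : ℕ) :
    Zvert β γ (G.addLoops v k) v i = edgeW β γ i i ^ k * Zvert β γ G v i := by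
  simp only [Zvert, MultiGraph.addLoops, Multiset.map_add, Multiset.map_replicate,
    Multiset.prod_add, Multiset.prod_replicate, Finset.mul_sum]
  refine Finset.sum_congr rfl fun σ _ => ?_
  split_ifs with hσ
  · rw [hσ]
  · rw [mul_zero]

lemma sum_edgeW_mul_Zvert (f : Bool → ℝ) :
    ∑ j, f j * Zvert β γ G v j =
      ∑ σ : Fin G.n → Bool,
        f (σ v) * (G.edges.map fun e => edgeW β γ (σ e.1) (σ e.2)).prod := by
  simp only [Zvert, Finset.mul_sum, mul_ite, mul_zero]
  rw [Finset.sum_comm]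
  simp only [Finset.sum_ite_eq, Finset.mem_univ, if_true]

lemma Zvert_addPendant (m : ℕ) :
    Zvert β γ (G.addPendant v m) (0 : Fin (G.n + 1)) i =
      ∑ j, edgeW β γ i j ^ m * Zvert β γ G v j := by
  rw [sum_edgeW_mul_Zvert β γ G v fun j => edgeW β γ i j ^ m]
  unfold Zvert MultiGraph.addPendant
  rw [← (Fin.consEquiv fun _ => Bool).sum_comp, Fintype.sum_prod_type, Finset.sum_comm]
  simp [Fin.consEquiv]

end Zvert

/-- `(a, b)` is the pair `([Z_{G,v}]₀, [Z_{G,v}]₁)` of some graph `G` rooted at a vertex `v`. Unlike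
the ratio in `Realizable`, the pair makes sense also when `[Z_{G,v}]₀ = 0`. -/
def RealizablePair (β γ a b : ℝ) : Prop :=
  ∃ (G : MultiGraph) (v : Fin G.n), Zvert β γ G v false = a ∧ Zvert β γ G v true = b

namespace RealizablePair

variable {β γ a b : ℝ}

lemma one_one : RealizablePair β γ 1 1 :=
  ⟨.singleVertex, (0 : Fin 1), Zvert_singleVertex β γ false, Zvert_singleVertex β γ true⟩

lemma addLoops (h : RealizablePair β γ a b) (k : ℕ) :
    RealizablePair β γ (β ^ k * a) (γ ^ k * b) := by
  obtain ⟨G, v, rfl, rfl⟩ := h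
  exact ⟨G.addLoops v k, v, Zvert_addLoops β γ G v false k, Zvert_addLoops β γ G v true k⟩

lemma addPendant (h : RealizablePair β γ a b) (m : ℕ) :
    RealizablePair β γ (β ^ m * a + b) (a + γ ^ m * b) := by
  obtain ⟨G, v, rfl, rfl⟩ := h
  refine ⟨G.addPendant v m, (0 : Fin (G.n + 1)), ?_, ?_⟩ <;>
  · rw [Zvert_addPendant]
    simp [edgeW, add_comm]

lemma realizable (h : RealizablePair β γ a b) (ha : a ≠ 0) : Realizable β γ (b / a) := by
  obtain ⟨G, v, rfl, rfl⟩ := h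
  exact ⟨G, v, ha, rfl⟩

lemma exists_realizable (h : RealizablePair β γ a b) (hb : b < 0) (hab : 0 < a + b) :
    ∃ r : ℝ, -1 < r ∧ r < 0 ∧ Realizable β γ r := by
  have ha : 0 < a := by linarith
  refine ⟨b / a, ?_, div_neg_of_neg_of_pos hb ha, h.realizable ha.ne'⟩
  rw [lt_div_iff₀ ha]
  linarith

end RealizablePair

lemma exists_pow_lt_mul_pow {K : Type*} [Field K] [LinearOrder K] [IsStrictOrderedRing K]
    [Archimedean K] {x y c : K} (hx : 0 ≤ x) (hxy : x < y) (hc : 0 < c) :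
    ∃ n : ℕ, x ^ n < c * y ^ n := by
  have hy : 0 < y := hx.trans_lt hxy
  obtain ⟨n, hn⟩ := exists_pow_lt_of_lt_one hc ((div_lt_one hy).2 hxy)
  exact ⟨n, by rwa [div_pow, div_lt_iff₀ (pow_pos hy n)] at hn⟩

section Region

variable {β γ : ℝ}

lemma exists_realizable_of_lt_neg_one (hγ : γ < -1) (hβγ : -2 < β + γ) :
    ∃ r : ℝ, -1 < r ∧ r < 0 ∧ Realizable β γ r := by
  have edge : RealizablePair β γ (β ^ 1 * 1 + 1) (1 + γ ^ 1 * 1) := .addPendant .one_one 1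
  exact edge.exists_realizable (by linarith) (by linarith)

lemma exists_realizable_of_neg_lt (hγ : γ < 0) (hβ : -γ < β) :
    ∃ r : ℝ, -1 < r ∧ r < 0 ∧ Realizable β γ r := by
  have loop : RealizablePair β γ (β ^ 1 * 1) (γ ^ 1 * 1) := .addLoops .one_one 1
  exact loop.exists_realizable (by linarith) (by linarith)

lemma exists_realizable_neg_left (hγ₁ : -1 < γ) (hγ₀ : γ < 0) :
    ∃ r : ℝ, -1 < r ∧ r < 0 ∧ Realizable (-γ) γ r := by
  have edge : RealizablePair (-γ) γ ((-γ) ^ 1 * 1 + 1) (1 + γ ^ 1 * 1) := .addPendant .one_one 1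
  refine (edge.addLoops 1).exists_realizable ?_ ?_
  · calc γ ^ 1 * (1 + γ ^ 1 * 1) = γ * (1 + γ) := by ring
      _ < 0 := mul_neg_of_neg_of_pos hγ₀ (by linarith)
  · calc 0 < 2 * γ ^ 2 := mul_pos two_pos (sq_pos_of_neg hγ₀)
      _ = _ := by ring

lemma exists_realizable_neg_one_right (hβ : |β| < 1) :
    ∃ r : ℝ, -1 < r ∧ r < 0 ∧ Realizable β (-1) r := by
  have hβ₁ : -1 < β := (abs_lt.1 hβ).1
  have doubleEdge : RealizablePair β (-1) (β ^ 2 * 1 + 1) (1 + (-1) ^ 2 * 1) :=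
    .addPendant .one_one 2
  refine (doubleEdge.addPendant 1).exists_realizable ?_ ?_
  · calc β ^ 2 * 1 + 1 + (-1) ^ 1 * (1 + (-1) ^ 2 * 1) = β ^ 2 - 1 := by ring
      _ < 0 := sub_neg.2 ((sq_lt_one_iff_abs_lt_one β).2 hβ)
  · calc 0 < (1 + β) * (1 + β ^ 2) := mul_pos (by linarith) (by positivity)
      _ = _ := by ring

lemma exists_realizable_of_abs_lt_neg (hγ₁ : -1 < γ) (hβ : |β| < -γ) :
    ∃ r : ℝ, -1 < r ∧ r < 0 ∧ Realizable β γ r := by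
  have hγ₀ : 0 < -γ := (abs_nonneg β).trans_lt hβ
  have hβ₁ : 0 < 1 + β := by linarith [neg_abs_le β]
  have hsq : β ^ 2 < γ ^ 2 := sq_lt_sq.2 (hβ.trans_le (neg_le_abs γ))
  obtain ⟨n, hn⟩ := exists_pow_lt_mul_pow (sq_nonneg β) hsq hγ₀
  rw [← pow_mul, ← pow_mul] at hn
  have hβn : 0 ≤ β ^ (2 * n) := (even_two_mul n).pow_nonneg β
  have hγn : 0 < γ ^ (2 * n) := (even_two_mul n).pow_pos (neg_pos.1 hγ₀).ne
  have loops : RealizablePair β γ (β ^ (2 * n) * 1) (γ ^ (2 * n) * 1) := .addLoops .one_one (2 * n)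
  refine (loops.addPendant 1).exists_realizable (by linarith) ?_
  calc 0 < (1 + β) * β ^ (2 * n) + (1 + γ) * γ ^ (2 * n) :=
        add_pos_of_nonneg_of_pos (mul_nonneg hβ₁.le hβn) (mul_pos (by linarith) hγn)
    _ = _ := by ring

end Region

theorem stmt13_general (β γ : ℝ) (hβγ : γ < β) (hsum : -2 < β + γ) (hγ : γ < 0)
    (hne : (β, γ) ≠ ((1 : ℝ), (-1 : ℝ))) :
    ∃ r : ℝ, -1 < r ∧ r < 0 ∧ Realizable β γ r := by
  rcases lt_trichotomy β (-γ) with hβ | rfl | hβ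
  · have habs : |β| < -γ := abs_lt.2 ⟨by linarith, hβ⟩
    rcases lt_trichotomy γ (-1) with hγ₁ | rfl | hγ₁
    · exact exists_realizable_of_lt_neg_one hγ₁ hsum
    · exact exists_realizable_neg_one_right (by rwa [neg_neg] at habs)
    · exact exists_realizable_of_abs_lt_neg hγ₁ habs
  · rcases lt_trichotomy γ (-1) with hγ₁ | rfl | hγ₁
    · exact exists_realizable_of_lt_neg_one hγ₁ hsum
    · exact absurd (by rw [neg_neg]) hne
    · exact exists_realizable_neg_left hγ₁ hγ
  · exact exists_realizable_of_neg_lt hγ hβ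

/-- For `(β, γ) ∈ Γ = {β > γ, −2 < β + γ < 1, γ < 0} \ {(1,−1)}`, some real
number in the open interval `(−1, 0)` is realizable. -/
theorem stmt13 (β γ : ℝ) (h1 : β > γ) (h2 : -2 < β + γ) (h3 : β + γ < 1)
    (h4 : γ < 0) (h5 : (β, γ) ≠ ((1 : ℝ), (-1 : ℝ))) :
    ∃ r : ℝ, -1 < r ∧ r < 0 ∧ Realizable β γ r :=
  stmt13_general β γ h1 h2 h4 h5
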